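/- arXiv:1905.10061 — 12 statements merged into one kernel-verified Lean document; each statement's English description precedes it below -/
import Mathlib

section
/- Let (X,d) be a compact metric space, let φ_n : X → X (n ≥ 1) be a sequence of homeomorphisms, and let n₀ ≥ 1 be a natural number. The non-autonomous system (X, φ_{1,∞}) is n₀-expansive (in the two-sided sense) if and only if there exists a finite open cover 𝓑 of X such that for every bisequence {B_m}_{m∈ℤ} of members of 𝓑, the intersection ⋂_{m∈ℤ} (φ₁^m)⁻¹(closure(B_m)) has at most n₀ elements. -/
open Set Metric Filter Topology

/-- `phiComp φ n = φ_n ∘ ⋯ ∘ φ_1` (with `phiComp φ 0 = id`), the compositions of the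
non-autonomous system `φ_{1,∞}` given by the maps `φ 1, φ 2, …` (`φ 0` is unused). -/
def phiComp {X : Type*} (φ : ℕ → X → X) : ℕ → X → X
  | 0 => id
  | n + 1 => φ (n + 1) ∘ phiComp φ n

/-- For a system of homeomorphisms, `phiCompH φ n = φ_n ∘ ⋯ ∘ φ_1` as a homeomorphism. -/
def phiCompH {X : Type*} [TopologicalSpace X] (φ : ℕ → X ≃ₜ X) : ℕ → X ≃ₜ X
  | 0 => Homeomorph.refl X
  | n + 1 => (phiCompH φ n).trans (φ (n + 1))

/-- Two-sided compositions: `phiZ φ i = φ₁^i` for `i ≥ 0` and `φ₁^i = (φ₁^{|i|})⁻¹` for `i < 0`. -/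
def phiZ {X : Type*} [TopologicalSpace X] (φ : ℕ → X ≃ₜ X) (i : ℤ) : X → X :=
  if 0 ≤ i then ⇑(phiCompH φ i.toNat) else ⇑(phiCompH φ (-i).toNat).symm

/-- `segComp φ a m = φ_{a+m} ∘ ⋯ ∘ φ_{a+1}`. -/
def segComp {X : Type*} (φ : ℕ → X → X) (a : ℕ) : ℕ → X → X
  | 0 => id
  | m + 1 => φ (a + m + 1) ∘ segComp φ a m

/-- The `k`-th iterate system `(φ_{1,∞})^k`: its `n`-th map is
`φ_{nk} ∘ ⋯ ∘ φ_{(n-1)k+1}`. -/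
def iterateSys {X : Type*} (φ : ℕ → X → X) (k : ℕ) : ℕ → X → X :=
  fun n => segComp φ ((n - 1) * k) k

/-- `(X, φ_{1,∞})` is `n₀`-expansive (one-sided). -/
def IsNExpansive {X : Type*} [MetricSpace X] (φ : ℕ → X → X) (n₀ : ℕ) : Prop :=
  ∃ c > (0 : ℝ), ∀ x : X,
    {y : X | ∀ i : ℕ, dist (phiComp φ i x) (phiComp φ i y) ≤ c}.encard ≤ (n₀ : ℕ∞)

/-- `(X, φ_{1,∞})` is ℵ₀-expansive (one-sided). -/
def IsAleph0Expansive {X : Type*} [MetricSpace X] (φ : ℕ → X → X) : Prop :=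
  ∃ c > (0 : ℝ), ∀ x : X,
    {y : X | ∀ i : ℕ, dist (phiComp φ i x) (phiComp φ i y) ≤ c}.Countable

/-- `(X, φ_{1,∞})` is `n₀`-expansive in the two-sided sense. -/
def IsNExpansiveZ {X : Type*} [MetricSpace X] (φ : ℕ → X ≃ₜ X) (n₀ : ℕ) : Prop :=
  ∃ c > (0 : ℝ), ∀ x : X,
    {y : X | ∀ i : ℤ, dist (phiZ φ i x) (phiZ φ i y) ≤ c}.encard ≤ (n₀ : ℕ∞)

/-- `(X, φ_{1,∞})` is ℵ₀-expansive in the two-sided sense. -/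
def IsAleph0ExpansiveZ {X : Type*} [MetricSpace X] (φ : ℕ → X ≃ₜ X) : Prop :=
  ∃ c > (0 : ℝ), ∀ x : X,
    {y : X | ∀ i : ℤ, dist (phiZ φ i x) (phiZ φ i y) ≤ c}.Countable

/-- `(X, φ_{1,∞})` is continuum-wise expansive. -/
def IsCwExpansive {X : Type*} [MetricSpace X] (φ : ℕ → X → X) : Prop :=
  ∃ c > (0 : ℝ), ∀ C : Set X, IsCompact C → IsConnected C → C.Nontrivial →
    ∃ n : ℕ, c < Metric.diam (phiComp φ n '' C)

/-- `(X, φ_{1,∞})` is meagre-expansive (one-sided). -/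
def IsMeagreExpansive {X : Type*} [MetricSpace X] (φ : ℕ → X → X) : Prop :=
  ∃ c > (0 : ℝ), ∀ x : X,
    IsNowhereDense {y : X | ∀ i : ℕ, dist (phiComp φ i x) (phiComp φ i y) ≤ c}

/-- On a compact metric space, a non-autonomous system of homeomorphisms is
`n₀`-expansive (two-sided sense) iff there is a finite open cover `𝓑` of `X` such that for
every bisequence `{B m}` of members of `𝓑`, `⋂ m, (φ₁^m)⁻¹ (closure (B m))` has at most
`n₀` elements. -/
theorem stmt0 {X : Type*} [MetricSpace X] [CompactSpace X]
    (φ : ℕ → X ≃ₜ X) (n₀ : ℕ) (hn₀ : 1 ≤ n₀) :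
    IsNExpansiveZ φ n₀ ↔
      ∃ 𝓑 : Finset (Set X), (∀ B ∈ 𝓑, IsOpen B) ∧ ⋃₀ (𝓑 : Set (Set X)) = Set.univ ∧
        ∀ B : ℤ → Set X, (∀ m, B m ∈ 𝓑) →
          (⋂ m : ℤ, phiZ φ m ⁻¹' closure (B m)).encard ≤ (n₀ : ℕ∞) := by
  classical
  constructor
  · rintro ⟨c, hc, h⟩
    obtain ⟨t, -, htf, ht⟩ := (isCompact_univ (X := X)).finite_cover_balls (half_pos hc)
    refine ⟨htf.toFinset.image (fun x => ball x (c / 2)), ?_, ?_, ?_⟩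
    · intro B hB
      obtain ⟨x, -, rfl⟩ := Finset.mem_image.1 hB
      exact isOpen_ball
    · refine eq_univ_of_forall fun y => ?_
      obtain ⟨x, hx, hy⟩ := mem_iUnion₂.1 (ht (mem_univ y))
      exact ⟨ball x (c / 2), by
        simpa using ⟨x, hx, rfl⟩, hy⟩
    · intro B hB
      rcases (⋂ m : ℤ, phiZ φ m ⁻¹' closure (B m)).eq_empty_or_nonempty with he | ⟨x, hx⟩
      · rw [he]; simp
      · refine le_trans (encard_le_encard ?_) (h x)
        intro y hy i
        have hxi := mem_iInter.1 hx i
        have hyi := mem_iInter.1 hy i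
        obtain ⟨z, -, hz⟩ := Finset.mem_image.1 (hB i)
        rw [mem_preimage, ← hz] at hxi hyi
        have h1 := mem_closedBall.1 (closure_ball_subset_closedBall hxi)
        have h2 := mem_closedBall.1 (closure_ball_subset_closedBall hyi)
        have h3 := dist_triangle_right (phiZ φ i x) (phiZ φ i y) z
        linarith
  · rintro ⟨𝓑, ho, hU, h⟩
    obtain ⟨δ, hδ, hL⟩ := lebesgue_number_lemma_of_metric_sUnion (isCompact_univ (X := X))
      (c := (𝓑 : Set (Set X))) (fun B hB => ho B hB) hU.ge
    refine ⟨δ / 2, half_pos hδ, fun x => ?_⟩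
    choose B hB hBs using fun m : ℤ => hL (phiZ φ m x) (mem_univ _)
    refine le_trans (encard_le_encard ?_) (h B hB)
    intro y hy
    refine mem_iInter.2 fun m => subset_closure (hBs m ?_)
    have h1 := hy m
    rw [mem_ball, dist_comm]
    linarith
end

section
/- Let (X,d) be a compact metric space and let φ_n : X → X (n ≥ 1) be a sequence of homeomorphisms. The non-autonomous system (X, φ_{1,∞}) is ℵ₀-expansive (in the two-sided sense) if and only if there exists a finite open cover 𝓑 of X such that for every bisequence {B_m}_{m∈ℤ} of members of 𝓑, the intersection ⋂_{m∈ℤ} (φ₁^m)⁻¹(closure(B_m)) is countable. -/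
open Set Metric Filter Topology

/-- On a compact metric space, a non-autonomous system of homeomorphisms is
ℵ₀-expansive (two-sided sense) iff there is a finite open cover `𝓑` of `X` such that for
every bisequence `{B m}` of members of `𝓑`, `⋂ m, (φ₁^m)⁻¹ (closure (B m))` is countable. -/
theorem stmt1 {X : Type*} [MetricSpace X] [CompactSpace X] (φ : ℕ → X ≃ₜ X) :
    IsAleph0ExpansiveZ φ ↔
      ∃ 𝓑 : Finset (Set X), (∀ B ∈ 𝓑, IsOpen B) ∧ ⋃₀ (𝓑 : Set (Set X)) = Set.univ ∧
        ∀ B : ℤ → Set X, (∀ m, B m ∈ 𝓑) →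
          (⋂ m : ℤ, phiZ φ m ⁻¹' closure (B m)).Countable := by
  constructor
  · rintro ⟨c, hc, h⟩
    obtain ⟨t, -, htf, ht⟩ := finite_cover_balls_of_compact (isCompact_univ (X := X))
      (half_pos hc)
    classical
    refine ⟨htf.toFinset.image (fun x => ball x (c / 2)), ?_, ?_, ?_⟩
    · intro B hB
      obtain ⟨x, -, rfl⟩ := Finset.mem_image.1 hB
      exact isOpen_ball
    · refine eq_univ_of_forall fun y => ?_
      obtain ⟨x, hx, hy⟩ := mem_iUnion₂.1 (ht (mem_univ y))
      exact ⟨ball x (c / 2), by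
        simpa using ⟨x, hx, rfl⟩, hy⟩
    · intro B hB
      rcases eq_empty_or_nonempty (⋂ m : ℤ, phiZ φ m ⁻¹' closure (B m)) with he | ⟨x, hx⟩
      · rw [he]; exact countable_empty
      · refine Set.Countable.mono ?_ (h x)
        intro y hy i
        obtain ⟨z, -, hz⟩ := Finset.mem_image.1 (hB i)
        have h1 := mem_iInter.1 hx i
        have h2 := mem_iInter.1 hy i
        rw [← hz] at h1 h2
        have h1' := mem_closedBall.1 (closure_ball_subset_closedBall h1)
        have h2' := mem_closedBall.1 (closure_ball_subset_closedBall h2)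
        have := dist_triangle_right (phiZ φ i x) (phiZ φ i y) z
        linarith
  · rintro ⟨𝓑, ho, hcov, h⟩
    obtain ⟨δ, hδ, hL⟩ := lebesgue_number_lemma_of_metric_sUnion (isCompact_univ (X := X))
      (c := (𝓑 : Set (Set X))) (fun B hB => ho B hB) hcov.ge
    refine ⟨δ / 2, half_pos hδ, fun x => ?_⟩
    choose B hB hs using fun m : ℤ => hL (phiZ φ m x) (mem_univ _)
    refine Set.Countable.mono ?_ (h B hB)
    intro y hy
    refine mem_iInter.2 fun m => ?_
    rw [mem_preimage]
    refine subset_closure (hs m ?_)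
    rw [mem_ball, dist_comm]
    have := hy m
    linarith
end

section
/- Let (X₁,d₁) and (X₂,d₂) be metric spaces carrying non-autonomous systems φ_{1,∞} and ψ_{1,∞} respectively, and suppose there is a homeomorphism h : X₁ → X₂ such that both h and h⁻¹ are uniformly continuous and h ∘ φ_n = ψ_n ∘ h for all n ≥ 1. If (X₁, φ_{1,∞}) is ℵ₀-expansive, then (X₂, ψ_{1,∞}) is ℵ₀-expansive. -/
open Set Metric Filter Topology

/-- ℵ₀-expansiveness is preserved by uniform conjugacy. -/
theorem stmt3 {X₁ X₂ : Type*} [MetricSpace X₁] [MetricSpace X₂]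
    (φ : ℕ → X₁ → X₁) (ψ : ℕ → X₂ → X₂)
    (hφ : ∀ n, 1 ≤ n → Continuous (φ n)) (hψ : ∀ n, 1 ≤ n → Continuous (ψ n))
    (h : X₁ ≃ₜ X₂) (hu : UniformContinuous h) (hu' : UniformContinuous h.symm)
    (hconj : ∀ n, 1 ≤ n → (h : X₁ → X₂) ∘ φ n = ψ n ∘ (h : X₁ → X₂))
    (hexp : IsAleph0Expansive φ) : IsAleph0Expansive ψ := by
  have key : ∀ i x, h.symm (phiComp ψ i x) = phiComp φ i (h.symm x) := by
    intro i
    induction i with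
    | zero => intro x; rfl
    | succ n ih =>
      intro x
      have h1 := congrFun (hconj (n + 1) (by omega)) (phiComp φ n (h.symm x))
      simp only [Function.comp_apply] at h1
      rw [← ih x, h.apply_symm_apply] at h1
      simp only [phiComp, Function.comp_apply]
      rw [← h1, h.symm_apply_apply, ih x]
  obtain ⟨c, hc, H⟩ := hexp
  obtain ⟨δ, hδ, hd⟩ := Metric.uniformContinuous_iff.1 hu' c hc
  refine ⟨δ / 2, by positivity, fun x => ?_⟩
  refine ((H (h.symm x)).preimage h.symm.injective).mono ?_
  intro y hy i
  rw [← key, ← key]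
  exact (hd (lt_of_le_of_lt (hy i) (by linarith))).le
end

section
/- Let (X,d) be a metric space, let φ_n : X → X (n ≥ 1) be a sequence of continuous maps such that the family {φ_n : n ≥ 1} is uniformly equicontinuous, let n₀ ≥ 1 be a natural number, and let k ≥ 1. Then (X, φ_{1,∞}) is n₀-expansive if and only if its k-th iterate system (φ_{1,∞})^k is n₀-expansive. -/
open Set Metric Filter Topology

theorem phiComp_segComp {X : Type*} (φ : ℕ → X → X) (a m : ℕ) (x : X) :
    phiComp φ (a + m) x = segComp φ a m (phiComp φ a x) := by
  induction m with
  | zero => rfl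
  | succ m ih =>
    change φ (a + m + 1) (phiComp φ (a + m) x) = φ (a + m + 1) (segComp φ a m (phiComp φ a x))
    rw [ih]

theorem phiComp_iterateSys {X : Type*} (φ : ℕ → X → X) (k n : ℕ) (x : X) :
    phiComp (iterateSys φ k) n x = phiComp φ (n * k) x := by
  induction n with
  | zero => simp [phiComp]
  | succ n ih =>
    rw [Nat.succ_mul, phiComp_segComp φ, ← ih]
    simp [phiComp, iterateSys]

theorem segComp_equi {X : Type*} [MetricSpace X] (φ : ℕ → X → X)
    (hequi : ∀ ε > (0 : ℝ), ∃ δ > (0 : ℝ), ∀ n, 1 ≤ n → ∀ x y : X,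
      dist x y ≤ δ → dist (φ n x) (φ n y) ≤ ε) (k : ℕ) :
    ∀ ε > (0 : ℝ), ∃ δ > (0 : ℝ), ∀ m ≤ k, ∀ a, ∀ x y : X,
      dist x y ≤ δ → dist (segComp φ a m x) (segComp φ a m y) ≤ ε := by
  induction k with
  | zero =>
    intro ε hε
    refine ⟨ε, hε, fun m hm a x y h => ?_⟩
    obtain rfl : m = 0 := by omega
    exact h
  | succ k ih =>
    intro ε hε
    obtain ⟨δ₁, h₁, H₁⟩ := hequi ε hε
    obtain ⟨δ₂, h₂, H₂⟩ := ih δ₁ h₁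
    obtain ⟨δ₃, h₃, H₃⟩ := ih ε hε
    refine ⟨min δ₂ δ₃, lt_min h₂ h₃, fun m hm a x y h => ?_⟩
    rcases Nat.lt_or_ge k m with hlt | hle
    · obtain rfl : m = k + 1 := by omega
      exact H₁ _ (by omega) _ _ (H₂ k le_rfl a x y (h.trans (min_le_left _ _)))
    · exact H₃ m hle a x y (h.trans (min_le_right _ _))

/-- For a uniformly equicontinuous family `{φ_n}` and `k ≥ 1`,
`φ_{1,∞}` is `n₀`-expansive iff `(φ_{1,∞})^k` is `n₀`-expansive. -/
theorem stmt4 {X : Type*} [MetricSpace X] (φ : ℕ → X → X)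
    (hφ : ∀ n, 1 ≤ n → Continuous (φ n))
    (hequi : ∀ ε > (0 : ℝ), ∃ δ > (0 : ℝ), ∀ n, 1 ≤ n → ∀ x y : X,
      dist x y ≤ δ → dist (φ n x) (φ n y) ≤ ε)
    (n₀ k : ℕ) (hn₀ : 1 ≤ n₀) (hk : 1 ≤ k) :
    IsNExpansive φ n₀ ↔ IsNExpansive (iterateSys φ k) n₀ := by
  constructor
  · rintro ⟨c, hc, H⟩
    obtain ⟨δ, hδ, D⟩ := segComp_equi φ hequi k c hc
    refine ⟨δ, hδ, fun x => (Set.encard_le_encard ?_).trans (H x)⟩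
    intro y hy i
    have h := hy (i / k)
    rw [phiComp_iterateSys, phiComp_iterateSys] at h
    have h2 := D (i % k) (Nat.mod_lt _ hk).le (i / k * k) _ _ h
    rw [← phiComp_segComp, ← phiComp_segComp, Nat.div_add_mod'] at h2
    exact h2
  · rintro ⟨c, hc, H⟩
    refine ⟨c, hc, fun x => (Set.encard_le_encard ?_).trans (H x)⟩
    intro y hy i
    rw [phiComp_iterateSys, phiComp_iterateSys]
    exact hy _
end

section
/- Let (X,d) be a metric space, let φ_n : X → X (n ≥ 1) be a sequence of continuous maps such that the family {φ_n : n ≥ 1} is uniformly equicontinuous, and let k ≥ 1. Then (X, φ_{1,∞}) is ℵ₀-expansive if and only if its k-th iterate system (φ_{1,∞})^k is ℵ₀-expansive. -/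
open Set Metric Filter Topology

theorem segComp_unif {X : Type*} [MetricSpace X] (φ : ℕ → X → X)
    (hequi : ∀ ε > (0 : ℝ), ∃ δ > (0 : ℝ), ∀ n, 1 ≤ n → ∀ x y : X,
      dist x y ≤ δ → dist (φ n x) (φ n y) ≤ ε) (m : ℕ) :
    ∀ ε > (0 : ℝ), ∃ δ > (0 : ℝ), ∀ j ≤ m, ∀ (a : ℕ) (x y : X),
      dist x y ≤ δ → dist (segComp φ a j x) (segComp φ a j y) ≤ ε := by
  induction m with
  | zero =>
    intro ε hε
    refine ⟨ε, hε, fun j hj a x y h => ?_⟩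
    obtain rfl : j = 0 := by omega
    exact h
  | succ m ih =>
    intro ε hε
    obtain ⟨δ₁, h₁, H₁⟩ := hequi ε hε
    obtain ⟨δ₂, h₂, H₂⟩ := ih (min ε δ₁) (lt_min hε h₁)
    refine ⟨δ₂, h₂, fun j hj a x y h => ?_⟩
    rcases Nat.lt_or_ge m j with hlt | hle
    · obtain rfl : j = m + 1 := by omega
      exact H₁ _ (by omega) _ _ ((H₂ m le_rfl a x y h).trans (min_le_right _ _))
    · exact (H₂ j hle a x y h).trans (min_le_left _ _)

theorem phiComp_add {X : Type*} (φ : ℕ → X → X) (a j : ℕ) (x : X) :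
    phiComp φ (a + j) x = segComp φ a j (phiComp φ a x) := by
  induction j with
  | zero => rfl
  | succ j ih =>
    change φ (a + j + 1) (phiComp φ (a + j) x) = φ (a + j + 1) (segComp φ a j (phiComp φ a x))
    rw [ih]

/-- For a uniformly equicontinuous family `{φ_n}` and `k ≥ 1`,
`φ_{1,∞}` is ℵ₀-expansive iff `(φ_{1,∞})^k` is ℵ₀-expansive. -/
theorem stmt5 {X : Type*} [MetricSpace X] (φ : ℕ → X → X)
    (hφ : ∀ n, 1 ≤ n → Continuous (φ n))
    (hequi : ∀ ε > (0 : ℝ), ∃ δ > (0 : ℝ), ∀ n, 1 ≤ n → ∀ x y : X,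
      dist x y ≤ δ → dist (φ n x) (φ n y) ≤ ε)
    (k : ℕ) (hk : 1 ≤ k) :
    IsAleph0Expansive φ ↔ IsAleph0Expansive (iterateSys φ k) := by
  constructor
  · rintro ⟨c, hc, H⟩
    obtain ⟨δ, hδ, Hδ⟩ := segComp_unif φ hequi k c hc
    refine ⟨δ, hδ, fun x => Set.Countable.mono ?_ (H x)⟩
    intro y hy i
    have h := hy (i / k)
    rw [phiComp_iterateSys, phiComp_iterateSys] at h
    have h2 := Hδ (i % k) (Nat.mod_lt i hk).le (i / k * k) _ _ h
    rwa [← phiComp_add, ← phiComp_add, Nat.div_add_mod'] at h2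
  · rintro ⟨c, hc, H⟩
    refine ⟨c, hc, fun x => Set.Countable.mono ?_ (H x)⟩
    intro y hy i
    rw [phiComp_iterateSys, phiComp_iterateSys]
    exact hy _
end

section
/- Let (X₁,d₁) and (X₂,d₂) be metric spaces with non-autonomous systems φ_{1,∞} and ψ_{1,∞} respectively, and equip X₁ × X₂ with the metric d((x₁,x₂),(y₁,y₂)) = max{d₁(x₁,y₁), d₂(x₂,y₂)}. If both (X₁, φ_{1,∞}) and (X₂, ψ_{1,∞}) are ℵ₀-expansive, then the product system (X₁ × X₂, {φ_n × ψ_n}_{n≥1}) is ℵ₀-expansive. -/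
open Set Metric Filter Topology

/-- The product (with the max metric, which is the product metric in Mathlib)
of two ℵ₀-expansive non-autonomous systems is ℵ₀-expansive. -/
theorem stmt9 {X₁ X₂ : Type*} [MetricSpace X₁] [MetricSpace X₂]
    (φ : ℕ → X₁ → X₁) (ψ : ℕ → X₂ → X₂)
    (hφ : ∀ n, 1 ≤ n → Continuous (φ n)) (hψ : ∀ n, 1 ≤ n → Continuous (ψ n))
    (h₁ : IsAleph0Expansive φ) (h₂ : IsAleph0Expansive ψ) :
    IsAleph0Expansive (fun n => Prod.map (φ n) (ψ n)) := by
  have key : ∀ (i : ℕ) (p : X₁ × X₂),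
      phiComp (fun n => Prod.map (φ n) (ψ n)) i p = (phiComp φ i p.1, phiComp ψ i p.2) := by
    intro i p
    induction i with
    | zero => rfl
    | succ k ih => simp only [phiComp, Function.comp_apply, ih, Prod.map_apply]
  obtain ⟨c, hc, h⟩ := h₁
  obtain ⟨e, he, h'⟩ := h₂
  refine ⟨min c e, lt_min hc he, fun x => ((h x.1).prod (h' x.2)).mono ?_⟩
  intro y hy
  have hy2 : ∀ i : ℕ, dist (phiComp φ i x.1) (phiComp φ i y.1) ≤ min c e ∧
      dist (phiComp ψ i x.2) (phiComp ψ i y.2) ≤ min c e := by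
    intro i
    have := hy i
    rw [key, key, Prod.dist_eq] at this
    exact max_le_iff.mp this
  exact ⟨fun i => (hy2 i).1.trans (min_le_left _ _), fun i => (hy2 i).2.trans (min_le_right _ _)⟩
end

section
/- Let (X,d) be a compact metric space and let φ_n : X → X (n ≥ 1) be a sequence of homeomorphisms. If (X, φ_{1,∞}) is ℵ₀-expansive in the two-sided sense, then the set A(X, φ_{1,∞}) of points with converging semi-orbits (points x for which the sequence (φ₁ⁿ(x))_{n→+∞} converges and the sequence (φ₁^{−n}(x))_{n→+∞} converges) is countable. -/
open Set Metric Filter Topology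

/-- On a compact metric space, if a system of homeomorphisms is ℵ₀-expansive
in the two-sided sense, then the set of points with converging semi-orbits is countable. -/
theorem stmt12 {X : Type*} [MetricSpace X] [CompactSpace X] (φ : ℕ → X ≃ₜ X)
    (hexp : IsAleph0ExpansiveZ φ) :
    {x : X |
      (∃ L : X, Filter.Tendsto (fun n : ℕ => phiZ φ (n : ℤ) x) Filter.atTop (nhds L)) ∧
      (∃ L : X, Filter.Tendsto (fun n : ℕ => phiZ φ (-(n : ℤ)) x) Filter.atTop (nhds L))}.Countable := by
  obtain ⟨c, hc, hx⟩ := hexp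
  have hcont : ∀ i : ℤ, Continuous (phiZ φ i) := by
    intro i
    unfold phiZ
    split_ifs
    · exact (phiCompH φ i.toNat).continuous
    · exact (phiCompH φ (-i).toNat).symm.continuous
  obtain ⟨D, hDc, hDd⟩ := TopologicalSpace.exists_countable_dense X
  have hc2 : 0 < c / 2 := by positivity
  -- the pieces of the decomposition
  let B : X → X → ℕ → Set X := fun p q N => {x : X | ∀ n : ℕ, N ≤ n →
    dist (phiZ φ (n : ℤ) x) p < c / 2 ∧ dist (phiZ φ (-(n : ℤ)) x) q < c / 2}
  have hB : ∀ p q N, (B p q N).Countable := by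
    intro p q N
    let f : X → Set X := fun x => {y : X | y ∈ B p q N ∧
      ∀ i ∈ Finset.Icc (-(N : ℤ)) N, dist (phiZ φ i x) (phiZ φ i y) < c}
    have hf : ∀ x ∈ B p q N, f x ∈ 𝓝[B p q N] x := by
      intro x _
      have h1 : ∀ᶠ y in 𝓝[B p q N] x, ∀ i ∈ Finset.Icc (-(N : ℤ)) N,
          dist (phiZ φ i x) (phiZ φ i y) < c := by
        rw [Filter.eventually_all_finset]
        intro i _
        have h2 : Continuous fun y => dist (phiZ φ i x) (phiZ φ i y) :=
          continuous_const.dist (hcont i)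
        have h3 : ∀ᶠ y in 𝓝 x, dist (phiZ φ i x) (phiZ φ i y) < c :=
          h2.continuousAt.eventually (gt_mem_nhds (by simpa using hc))
        exact h3.filter_mono nhdsWithin_le_nhds
      filter_upwards [h1, self_mem_nhdsWithin] with y hy1 hy2
      exact ⟨hy2, hy1⟩
    obtain ⟨t, hts, htc, hst⟩ := TopologicalSpace.countable_cover_nhdsWithin hf
    refine (htc.biUnion fun x hxt => ?_).mono hst
    refine (hx x).mono ?_
    rintro y ⟨hyB, hy⟩ i
    have hxB := hts hxt
    by_cases hi : i ∈ Finset.Icc (-(N : ℤ)) N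
    · exact (hy i hi).le
    · rw [Finset.mem_Icc] at hi
      have hN : N ≤ i.natAbs := by omega
      have a := hxB _ hN
      have b := hyB _ hN
      rcases le_total 0 i with h | h
      · have e : ((i.natAbs : ℕ) : ℤ) = i := by omega
        rw [e] at a b
        have := dist_triangle_right (phiZ φ i x) (phiZ φ i y) p
        linarith [a.1, b.1]
      · have e : -((i.natAbs : ℕ) : ℤ) = i := by omega
        rw [e] at a b
        have := dist_triangle_right (phiZ φ i x) (phiZ φ i y) q
        linarith [a.2, b.2]
  have hU : (⋃ p ∈ D, ⋃ q ∈ D, ⋃ N : ℕ, B p q N).Countable :=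
    hDc.biUnion fun p _ => hDc.biUnion fun q _ => Set.countable_iUnion fun N => hB p q N
  refine hU.mono ?_
  rintro x ⟨⟨L, hL⟩, ⟨M, hM⟩⟩
  obtain ⟨p, hp, hpd⟩ := hDd.exists_dist_lt L hc2
  obtain ⟨q, hq, hqd⟩ := hDd.exists_dist_lt M hc2
  have h1 : ∀ᶠ n : ℕ in atTop, dist (phiZ φ (n : ℤ) x) p < c / 2 :=
    (hL.dist tendsto_const_nhds).eventually (gt_mem_nhds hpd)
  have h2 : ∀ᶠ n : ℕ in atTop, dist (phiZ φ (-(n : ℤ)) x) q < c / 2 :=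
    (hM.dist tendsto_const_nhds).eventually (gt_mem_nhds hqd)
  obtain ⟨N, hN⟩ := Filter.eventually_atTop.1 (h1.and h2)
  simp only [Set.mem_iUnion]
  exact ⟨p, hp, q, hq, N, hN⟩
end

section
/- Let (X,d) be a metric space and let φ_n : X → X (n ≥ 1) be a sequence of continuous maps. If (X, φ_{1,∞}) is ℵ₀-expansive, then it is continuum-wise expansive. -/
open Set Metric Filter Topology

/-- Every ℵ₀-expansive non-autonomous system is continuum-wise expansive. -/
theorem stmt13 {X : Type*} [MetricSpace X] (φ : ℕ → X → X)
    (hφ : ∀ n, 1 ≤ n → Continuous (φ n))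
    (hexp : IsAleph0Expansive φ) : IsCwExpansive φ := by
  obtain ⟨c, hc, h⟩ := hexp
  refine ⟨c, hc, fun C hC hconn hnt => ?_⟩
  by_contra! hcon
  obtain ⟨x, hx, y, hy, hxy⟩ := hnt
  have hcont : ∀ n, Continuous (phiComp φ n) := by
    intro n
    induction n with
    | zero => exact continuous_id
    | succ k ih => exact (hφ (k + 1) (by omega)).comp ih
  have hsub : C ⊆ {y : X | ∀ i : ℕ, dist (phiComp φ i x) (phiComp φ i y) ≤ c} := by
    intro z hz i
    exact (Metric.dist_le_diam_of_mem (hC.image (hcont i)).isBounded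
      (mem_image_of_mem _ hx) (mem_image_of_mem _ hz)).trans (hcon i)
  have hcount : C.Countable := (h x).mono hsub
  have hpre : IsPreconnected ((fun z => dist x z) '' C) :=
    hconn.isPreconnected.image _ (by fun_prop)
  have hIcc : Icc (dist x x) (dist x y) ⊆ (fun z => dist x z) '' C :=
    hpre.Icc_subset (mem_image_of_mem _ hx) (mem_image_of_mem _ hy)
  have hI : (Icc (dist x x) (dist x y)).Countable := (hcount.image _).mono hIcc
  have hlt : dist x x < dist x y := by
    rw [dist_self]
    exact dist_pos.mpr hxy
  have h1 := Cardinal.mk_Icc_real hlt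
  have h2 := Cardinal.le_aleph0_iff_set_countable.mpr hI
  rw [h1] at h2
  exact absurd h2 (not_le.mpr Cardinal.aleph0_lt_continuum)
end

section
/- Let (X,d) be an uncountable Lindelöf metric space and let φ_n : X → X (n ≥ 1) be a sequence of continuous maps such that the system (X, φ_{1,∞}) is uniformly equicontinuous. Then (X, φ_{1,∞}) is not ℵ₀-expansive. -/
open Set Metric Filter Topology

/-- On an uncountable Lindelöf metric space, a uniformly equicontinuous
non-autonomous system is never ℵ₀-expansive. -/
theorem stmt14 {X : Type*} [MetricSpace X] [LindelofSpace X]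
    (hX : ¬ (Set.univ : Set X).Countable)
    (φ : ℕ → X → X) (hφ : ∀ n, 1 ≤ n → Continuous (φ n))
    (hequi : ∀ ε > (0 : ℝ), ∃ δ > (0 : ℝ), ∀ x y : X, dist x y ≤ δ →
      ∀ n : ℕ, dist (phiComp φ n x) (phiComp φ n y) ≤ ε) :
    ¬ IsAleph0Expansive φ := by
  rintro ⟨c, hc, h⟩
  obtain ⟨δ, hδ, hd⟩ := hequi c hc
  obtain ⟨t, ht, hu⟩ := countable_cover_nhds (X := X)
    (U := fun x => Metric.closedBall x δ) (fun x => Metric.closedBall_mem_nhds x hδ)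
  apply hX
  rw [← hu]
  refine ht.biUnion fun x _ => (h x).mono fun y hy i => hd x y ?_ i
  rw [dist_comm]
  exact hy
end

section
/- Let (X,d) be a metric space, let φ_n : X → X (n ≥ 1) be a sequence of continuous maps, let n₀ ≥ 1 be a natural number, and let F ⊆ X be such that X∖F is finite. Then (X, φ_{1,∞}) is n₀-expansive if and only if it is n₀-expansive on F, i.e. there exists c > 0 such that for every x ∈ F the set {y ∈ F : d(φ₁^i(x), φ₁^i(y)) ≤ c for all i ∈ ℕ} has at most n₀ elements. -/
open Set Metric Filter Topology

/-- If `X \ F` is finite, then `(X, φ_{1,∞})` is `n₀`-expansive iff it is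
`n₀`-expansive on `F`. -/
theorem stmt15 {X : Type*} [MetricSpace X] (φ : ℕ → X → X)
    (hφ : ∀ n, 1 ≤ n → Continuous (φ n))
    (n₀ : ℕ) (hn₀ : 1 ≤ n₀) (F : Set X) (hF : Fᶜ.Finite) :
    IsNExpansive φ n₀ ↔
      ∃ c > (0 : ℝ), ∀ x ∈ F,
        {y ∈ F | ∀ i : ℕ, dist (phiComp φ i x) (phiComp φ i y) ≤ c}.encard ≤ (n₀ : ℕ∞) := by
  constructor
  · rintro ⟨c, hc, h⟩
    exact ⟨c, hc, fun x _ => (Set.encard_le_encard (fun y hy => hy.2)).trans (h x)⟩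
  · rintro ⟨c, hc, h⟩
    have key : ∀ p ∈ Fᶜ, ∀ᶠ r in 𝓝[>] (0 : ℝ), ∀ y : X,
        (∀ i : ℕ, dist (phiComp φ i p) (phiComp φ i y) ≤ r) → y = p := by
      intro p _
      have hfinF : {y ∈ F | ∀ i : ℕ, dist (phiComp φ i p) (phiComp φ i y) ≤ c / 2}.Finite := by
        rcases Set.eq_empty_or_nonempty
          {y ∈ F | ∀ i : ℕ, dist (phiComp φ i p) (phiComp φ i y) ≤ c / 2} with he | ⟨q, hq⟩
        · rw [he]; exact Set.finite_empty
        · have hq2 : {y ∈ F | ∀ i : ℕ, dist (phiComp φ i q) (phiComp φ i y) ≤ c}.Finite :=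
            Set.finite_of_encard_le_coe (h q hq.1)
          refine hq2.subset ?_
          rintro y ⟨hyF, hy⟩
          refine ⟨hyF, fun i => ?_⟩
          have h1 := dist_triangle_left (phiComp φ i q) (phiComp φ i y) (phiComp φ i p)
          have h2 := hq.2 i
          have h3 := hy i
          linarith
      have hfin := (hfinF.union hF).subset (diff_subset (t := {p}))
      have hnhds : ((_ ∪ Fᶜ) \ {p})ᶜ ∈ 𝓝 p :=
        hfin.isClosed.isOpen_compl.mem_nhds (fun hp => hp.2 rfl)
      obtain ⟨ε, hε, hball⟩ := Metric.mem_nhds_iff.1 hnhds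
      filter_upwards [Ioo_mem_nhdsGT (lt_min hε (half_pos hc))] with r hr y hy
      by_contra hne
      have h0 : dist p y ≤ r := hy 0
      have hyb : y ∈ Metric.ball p ε := by
        rw [Metric.mem_ball, dist_comm]
        exact h0.trans_lt (hr.2.trans_le (min_le_left _ _))
      refine hball hyb ⟨?_, hne⟩
      by_cases hyF : y ∈ F
      · exact Or.inl ⟨hyF, fun i => (hy i).trans (hr.2.le.trans (min_le_right _ _))⟩
      · exact Or.inr hyF
    have hall := (Filter.eventually_all_finite hF).2 key
    obtain ⟨r, hr, hr0, hrc⟩ := (hall.and (Ioo_mem_nhdsGT hc)).exists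
    refine ⟨r, hr0, fun x => ?_⟩
    by_cases hx : x ∈ F
    · refine (Set.encard_le_encard ?_).trans (h x hx)
      intro y hy
      refine ⟨?_, fun i => (hy i).trans hrc.le⟩
      by_contra hyF
      have := hr y hyF x (fun i => by rw [dist_comm]; exact hy i)
      exact hyF (this ▸ hx)
    · refine (Set.encard_le_encard (t := {x}) (fun y hy => hr x hx y hy)).trans ?_
      rw [Set.encard_singleton]
      exact_mod_cast hn₀
end

section
/- Let (X₁,d₁) and (X₂,d₂) be metric spaces carrying non-autonomous systems φ_{1,∞} and ψ_{1,∞} respectively, and suppose there is a homeomorphism h : X₁ → X₂ such that both h and h⁻¹ are uniformly continuous and h ∘ φ_n = ψ_n ∘ h for all n ≥ 1. If (X₁, φ_{1,∞}) is meagre-expansive, then (X₂, ψ_{1,∞}) is meagre-expansive. -/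
open Set Metric Filter Topology

/-- Meagre-expansiveness is preserved by uniform conjugacy. -/
theorem stmt17 {X₁ X₂ : Type*} [MetricSpace X₁] [MetricSpace X₂]
    (φ : ℕ → X₁ → X₁) (ψ : ℕ → X₂ → X₂)
    (hφ : ∀ n, 1 ≤ n → Continuous (φ n)) (hψ : ∀ n, 1 ≤ n → Continuous (ψ n))
    (h : X₁ ≃ₜ X₂) (hu : UniformContinuous h) (hu' : UniformContinuous h.symm)
    (hconj : ∀ n, 1 ≤ n → (h : X₁ → X₂) ∘ φ n = ψ n ∘ (h : X₁ → X₂))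
    (hexp : IsMeagreExpansive φ) : IsMeagreExpansive ψ := by
  have key : ∀ i x, h (phiComp φ i x) = phiComp ψ i (h x) := by
    intro i
    induction i with
    | zero => intro x; rfl
    | succ n ih =>
      intro x
      have h1 := congrFun (hconj (n + 1) (by omega)) (phiComp φ n x)
      simp only [Function.comp_apply] at h1
      simp only [phiComp, Function.comp_apply]
      rw [h1, ih]
  obtain ⟨c, hc, hx⟩ := hexp
  obtain ⟨δ, hδ, hd⟩ := Metric.uniformContinuous_iff.1 hu' c hc
  refine ⟨δ / 2, by positivity, fun x => ?_⟩
  have hn := hx (h.symm x)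
  unfold IsNowhereDense at hn ⊢
  set A := {y : X₁ | ∀ i : ℕ, dist (phiComp φ i (h.symm x)) (phiComp φ i y) ≤ c} with hA
  have hsub : {y : X₂ | ∀ i : ℕ, dist (phiComp ψ i x) (phiComp ψ i y) ≤ δ / 2} ⊆ h '' A := by
    intro y hy
    refine ⟨h.symm y, fun i => ?_, h.apply_symm_apply y⟩
    have h2 : dist (phiComp ψ i x) (phiComp ψ i y) < δ := lt_of_le_of_lt (hy i) (by linarith)
    have h3 := hd h2
    have e : ∀ z, h.symm (phiComp ψ i z) = phiComp φ i (h.symm z) := by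
      intro z
      rw [h.symm_apply_eq, key, h.apply_symm_apply]
    rw [e, e] at h3
    exact h3.le
  have h4 : interior (closure (h '' A)) = ∅ := by
    rw [← h.image_closure, ← h.image_interior, hn, Set.image_empty]
  exact Set.subset_eq_empty (interior_mono (closure_mono hsub)) h4
end

section
/- Let (X,d) be a nonempty Lindelöf metric space and let φ_n : X → X (n ≥ 1) be homeomorphisms such that the two-sided system is uniformly equicontinuous (for every ε > 0 there exists δ > 0 such that d(x,y) ≤ δ implies d(φ₁^i(x), φ₁^i(y)) ≤ ε for all i ∈ ℤ). Then (X, φ_{1,∞}) is not meagre-expansive in the two-sided sense. -/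
open Set Metric Filter Topology

/-- On a nonempty Lindelöf metric space, a uniformly equicontinuous (in the
two-sided sense) non-autonomous system of homeomorphisms is never meagre-expansive in the
two-sided sense. -/
theorem stmt19 {X : Type*} [MetricSpace X] [Nonempty X] [LindelofSpace X]
    (φ : ℕ → X ≃ₜ X)
    (hequi : ∀ ε > (0 : ℝ), ∃ δ > (0 : ℝ), ∀ x y : X, dist x y ≤ δ →
      ∀ i : ℤ, dist (phiZ φ i x) (phiZ φ i y) ≤ ε) :
    ¬ ∃ c > (0 : ℝ), ∀ x : X,
      IsNowhereDense {y : X | ∀ i : ℤ, dist (phiZ φ i x) (phiZ φ i y) ≤ c} := by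
  rintro ⟨c, hc, h⟩
  obtain ⟨x⟩ := ‹Nonempty X›
  obtain ⟨δ, hδ, hd⟩ := hequi c hc
  have hx := h x
  unfold IsNowhereDense at hx
  have hsub : Metric.ball x δ ⊆
      {y : X | ∀ i : ℤ, dist (phiZ φ i x) (phiZ φ i y) ≤ c} := by
    intro y hy
    exact hd x y (by rw [dist_comm]; exact (Metric.mem_ball.1 hy).le)
  have hmem : x ∈ interior (closure
      {y : X | ∀ i : ℤ, dist (phiZ φ i x) (phiZ φ i y) ≤ c}) :=
    interior_maximal (hsub.trans subset_closure) Metric.isOpen_ball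
      (Metric.mem_ball_self hδ)
  rw [hx] at hmem
  exact hmem
end
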